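/- Under the stated parameter constraints, Re[−i·e^{i((φ−θ)/α + φ/2)}] = sin((φ−θ)/α + φ/2) > 0. Consequently Re S(ζ₀) > 0, where ζ₀ = e^{i(φ−θ)/α} is the turning point (μ/c)^{1/α} and S(ζ₀) = −i·e^{i((φ−θ)/α + φ/2)}·∫₀^1 √(1−u^α) du is the integral of the continuous branch of √(c ζ^α − μ) with initial value −i e^{iφ/2} along the segment from 0 to ζ₀. -/

import Mathlib

open MeasureTheory Set

/-- `t₀(α) = 2πα/(α+2)`. -/
noncomputable def t0 (α : ℝ) : ℝ := 2 * Real.pi * α / (α + 2)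

theorem integral_sqrt_one_sub_rpow_pos {α : ℝ} (hα : 0 < α) :
    0 < ∫ u in (0 : ℝ)..1, Real.sqrt (1 - u ^ α) := by
  refine intervalIntegral.intervalIntegral_pos_of_pos_on ?_ ?_ one_pos
  · exact (Real.continuous_sqrt.comp
      (continuous_const.sub (Real.continuous_rpow_const hα.le))).intervalIntegrable 0 1
  · intro u hu
    exact Real.sqrt_pos.mpr (sub_pos.mpr (Real.rpow_lt_one hu.1.le hu.2 hα))

theorem re_neg_I_mul_exp_I_mul (x : ℝ) :
    (-Complex.I * Complex.exp (Complex.I * (x : ℂ))).re = Real.sin x := by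
  rw [mul_comm Complex.I (x : ℂ)]
  simp [Complex.exp_ofReal_mul_I_im]

theorem sin_turning_angle_pos {α θ δ φ : ℝ} (hα0 : 0 < α) (hα2 : α < 2)
    (hθ : t0 α ≤ θ) (hδ1 : 0 < δ) (hδ2 : δ < (Real.pi * min 1 α - θ) / 2)
    (hφ1 : t0 α - δ < φ) (hφ2 : φ < t0 α) :
    0 < Real.sin ((φ - θ) / α + φ / 2) := by
  have ht : t0 α * (α + 2) = 2 * Real.pi * α := by
    unfold t0
    field_simp
  have ht_pos : 0 < t0 α := by
    have := Real.pi_pos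
    unfold t0
    positivity
  have hangle : (φ - θ) / α + φ / 2 = (φ * (α + 2) - 2 * θ) / (2 * α) := by
    field_simp
    ring
  have hmin : Real.pi * min 1 α ≤ Real.pi * α :=
    mul_le_mul_of_nonneg_left (min_le_right 1 α) Real.pi_pos.le
  rw [hangle]
  apply Real.sin_pos_of_pos_of_lt_pi
  · apply div_pos _ (by positivity)
    nlinarith
  · rw [div_lt_iff₀ (by positivity)]
    nlinarith

/-- under the parameter constraints,
`Re[−i e^{i((φ−θ)/α + φ/2)}] = sin((φ−θ)/α + φ/2) > 0`; consequently
`Re S(ζ₀) > 0`, where `S(ζ₀) = −i e^{i((φ−θ)/α + φ/2)} ∫₀¹ √(1−u^α) du`. -/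
theorem stmt11 (α θ δ φ : ℝ) (hα0 : 0 < α) (hα2 : α < 2)
    (hθ1 : t0 α ≤ θ) (hθ2 : θ < min Real.pi (Real.pi * α))
    (hδ1 : 0 < δ) (hδ2 : δ < (Real.pi * min 1 α - θ) / 2)
    (hφ1 : t0 α - δ < φ) (hφ2 : φ < t0 α) :
    (-Complex.I * Complex.exp (Complex.I * (((φ - θ) / α + φ / 2 : ℝ) : ℂ))).re
      = Real.sin ((φ - θ) / α + φ / 2) ∧
    0 < Real.sin ((φ - θ) / α + φ / 2) ∧
    0 < (-Complex.I * Complex.exp (Complex.I * (((φ - θ) / α + φ / 2 : ℝ) : ℂ)) *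
      ((∫ u in (0 : ℝ)..1, Real.sqrt (1 - u ^ α) : ℝ) : ℂ)).re := by
  have hsin := sin_turning_angle_pos hα0 hα2 hθ1 hδ1 hδ2 hφ1 hφ2
  refine ⟨re_neg_I_mul_exp_I_mul _, hsin, ?_⟩
  rw [Complex.re_mul_ofReal, re_neg_I_mul_exp_I_mul]
  exact mul_pos hsin (integral_sqrt_one_sub_rpow_pos hα0)
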